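/- Let L : ℝ³ → ℝ be a smooth Lagrangian in the variables (x,u,p), let ξ, η, R : ℝ² → ℝ be smooth functions of (x,u), and let λ : ℝ³ → ℝ be a smooth function of (x,u,p). Define the truncated total derivative D_xF(x,u,p) = ∂_xF(x,u) + p·∂_uF(x,u) for F a function of (x,u), and the λ-prolonged coefficient η₁(x,u,p) = D_xη − p·D_xξ + λ·(η − ξ·p). Suppose the divergence λ-variational symmetry condition holds identically on ℝ³: ξ·∂_xL + η·∂_uL + η₁·∂_pL + L·(D_xξ + λ·ξ) = D_xR + λ·R. Define I(x,u,p) = ξ(x,u)·(L(x,u,p) − p·∂_pL(x,u,p)) + η(x,u)·∂_pL(x,u,p) − R(x,u). Then for every open interval J ⊆ ℝ and every twice differentiable u : J → ℝ solving the Euler-Lagrange equation d/dx[∂_pL(x,u(x),u'(x))] = ∂_uL(x,u(x),u'(x)) on J, the function φ(x) = I(x,u(x),u'(x)) satisfies φ'(x) = −λ(x,u(x),u'(x))·φ(x) for all x ∈ J. -/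

import Mathlib

/-- Truncated total derivative `D_x F (x,u,p) = ∂_x F(x,u) + p ∂_u F(x,u)`. -/
noncomputable def Dx (F : ℝ → ℝ → ℝ) (x u p : ℝ) : ℝ :=
  deriv (fun t => F t u) x + p * deriv (fun v => F x v) u

/-- Partial derivative of the Lagrangian with respect to `x`. -/
noncomputable def Lx (L : ℝ → ℝ → ℝ → ℝ) (x u p : ℝ) : ℝ := deriv (fun t => L t u p) x

/-- Partial derivative of the Lagrangian with respect to `u`. -/
noncomputable def Lu (L : ℝ → ℝ → ℝ → ℝ) (x u p : ℝ) : ℝ := deriv (fun v => L x v p) u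

/-- Partial derivative of the Lagrangian with respect to `p`. -/
noncomputable def Lp (L : ℝ → ℝ → ℝ → ℝ) (x u p : ℝ) : ℝ := deriv (fun q => L x u q) p

/-- First λ-prolonged coefficient `η₁ = D_x η − p D_x ξ + λ (η − ξ p)`. -/
noncomputable def eta1 (ξ η : ℝ → ℝ → ℝ) (lam : ℝ → ℝ → ℝ → ℝ) (x u p : ℝ) : ℝ :=
  Dx η x u p - p * Dx ξ x u p + lam x u p * (η x u - ξ x u * p)

/-- The Noether-type function `I = ξ (L − p ∂_p L) + η ∂_p L − R`. -/
noncomputable def NoetherI (L : ℝ → ℝ → ℝ → ℝ) (ξ η R : ℝ → ℝ → ℝ) (x u p : ℝ) : ℝ :=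
  ξ x u * (L x u p - p * Lp L x u p) + η x u * Lp L x u p - R x u

/-!
For every `λ`, without assuming symmetry or the Euler–Lagrange equation, `I` satisfies Noether's
identity along a curve `u`, with `Q = η − ξ u'` the characteristic of the vector field:
`d/dx I + λ I = (X L + L (D_x ξ + λ ξ)) − (D_x R + λ R) + Q (d/dx ∂_p L − ∂_u L)`.
The symmetry condition cancels the first two terms on the right, and the Euler–Lagrange equation
the last. No `u''` term remains because `d/dx L` and `(d/dx u') ∂_p L` both contribute `u'' ∂_p L`,
with opposite signs.
-/

section PartialDerivatives

variable {L : ℝ → ℝ → ℝ → ℝ} {x u p : ℝ}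

theorem Dx_eq_fderiv {F : ℝ → ℝ → ℝ} (hF : DifferentiableAt ℝ ↿F (x, u)) (p : ℝ) :
    Dx F x u p = fderiv ℝ ↿F (x, u) (1, p) := by
  have hx : deriv (fun t ↦ F t u) x = fderiv ℝ ↿F (x, u) (1, 0) :=
    (hF.hasFDerivAt.comp_hasDerivAt_of_eq x
      ((hasDerivAt_id x).prodMk (hasDerivAt_const x u)) rfl).deriv
  have hu : deriv (fun v ↦ F x v) u = fderiv ℝ ↿F (x, u) (0, 1) :=
    (hF.hasFDerivAt.comp_hasDerivAt_of_eq u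
      ((hasDerivAt_const u x).prodMk (hasDerivAt_id u)) rfl).deriv
  rw [Dx, hx, hu, ← smul_eq_mul, ← map_smul, ← map_add]
  simp

theorem Lx_eq_fderiv (hL : DifferentiableAt ℝ ↿L (x, u, p)) :
    Lx L x u p = fderiv ℝ ↿L (x, u, p) (1, 0, 0) :=
  (hL.hasFDerivAt.comp_hasDerivAt_of_eq x
    ((hasDerivAt_id x).prodMk (hasDerivAt_const x (u, p))) rfl).deriv

theorem Lu_eq_fderiv (hL : DifferentiableAt ℝ ↿L (x, u, p)) :
    Lu L x u p = fderiv ℝ ↿L (x, u, p) (0, 1, 0) :=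
  (hL.hasFDerivAt.comp_hasDerivAt_of_eq u
    ((hasDerivAt_const u x).prodMk ((hasDerivAt_id u).prodMk (hasDerivAt_const u p))) rfl).deriv

theorem Lp_eq_fderiv (hL : DifferentiableAt ℝ ↿L (x, u, p)) :
    Lp L x u p = fderiv ℝ ↿L (x, u, p) (0, 0, 1) :=
  (hL.hasFDerivAt.comp_hasDerivAt_of_eq p
    ((hasDerivAt_const p x).prodMk ((hasDerivAt_const p u).prodMk (hasDerivAt_id p))) rfl).deriv

theorem fderiv_apply_eq_Lx_add_Lu_add_Lp (hL : DifferentiableAt ℝ ↿L (x, u, p)) (a b c : ℝ) :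
    fderiv ℝ ↿L (x, u, p) (a, b, c) = a * Lx L x u p + b * Lu L x u p + c * Lp L x u p := by
  simp only [Lx_eq_fderiv hL, Lu_eq_fderiv hL, Lp_eq_fderiv hL, ← smul_eq_mul, ← map_smul,
    ← map_add]
  simp

theorem differentiableAt_Lp (hL : ContDiffAt ℝ 2 ↿L (x, u, p)) :
    DifferentiableAt ℝ ↿(Lp L) (x, u, p) := by
  have hfderiv : DifferentiableAt ℝ (fun z ↦ fderiv ℝ ↿L z (0, 0, 1)) (x, u, p) :=
    ((hL.fderiv_right_succ (n := 1)).differentiableAt one_ne_zero).clm_apply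
      (differentiableAt_const _)
  refine hfderiv.congr_of_eventuallyEq ?_
  filter_upwards [hL.eventually (by simp)] with z hz
  exact Lp_eq_fderiv (hz.differentiableAt two_ne_zero)

end PartialDerivatives

section ChainRule

variable {u v : ℝ → ℝ} {x u' v' : ℝ}

theorem hasDerivAt_comp_graph {F : ℝ → ℝ → ℝ} (hF : DifferentiableAt ℝ ↿F (x, u x))
    (hu : HasDerivAt u u' x) : HasDerivAt (fun t ↦ F t (u t)) (Dx F x (u x) u') x := by
  rw [Dx_eq_fderiv hF]
  exact hF.hasFDerivAt.comp_hasDerivAt x ((hasDerivAt_id x).prodMk hu)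

theorem hasDerivAt_comp_jet {L : ℝ → ℝ → ℝ → ℝ} (hL : DifferentiableAt ℝ ↿L (x, u x, v x))
    (hu : HasDerivAt u u' x) (hv : HasDerivAt v v' x) :
    HasDerivAt (fun t ↦ L t (u t) (v t))
      (Lx L x (u x) (v x) + u' * Lu L x (u x) (v x) + v' * Lp L x (u x) (v x)) x := by
  refine (hL.hasFDerivAt.comp_hasDerivAt x
    ((hasDerivAt_id x).prodMk (hu.prodMk hv))).congr_deriv ?_
  rw [fderiv_apply_eq_Lx_add_Lu_add_Lp hL, one_mul]

end ChainRule

/-- The variation `X L + L (D_x ξ + λ ξ)` of the Lagrangian form `L dx` under the λ-prolongation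
`X = ξ∂_x + η∂_u + η₁∂_p`. It equals `D_x R + λ R` exactly when `X` is a divergence λ-variational
symmetry with divergence term `R`. -/
noncomputable def lambdaVariation (L : ℝ → ℝ → ℝ → ℝ) (ξ η : ℝ → ℝ → ℝ) (lam : ℝ → ℝ → ℝ → ℝ)
    (x u p : ℝ) : ℝ :=
  ξ x u * Lx L x u p + η x u * Lu L x u p + eta1 ξ η lam x u p * Lp L x u p
    + L x u p * (Dx ξ x u p + lam x u p * ξ x u)

section Noether

variable {L : ℝ → ℝ → ℝ → ℝ} {ξ η R : ℝ → ℝ → ℝ} {u : ℝ → ℝ} {x : ℝ}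

theorem hasDerivAt_NoetherI_comp_jet (lam : ℝ → ℝ → ℝ → ℝ)
    (hL : ContDiffAt ℝ 2 ↿L (x, u x, deriv u x))
    (hξ : DifferentiableAt ℝ ↿ξ (x, u x)) (hη : DifferentiableAt ℝ ↿η (x, u x))
    (hR : DifferentiableAt ℝ ↿R (x, u x))
    (hu : DifferentiableAt ℝ u x) (hu' : DifferentiableAt ℝ (deriv u) x) :
    HasDerivAt (fun t ↦ NoetherI L ξ η R t (u t) (deriv u t))
      (lambdaVariation L ξ η lam x (u x) (deriv u x)
        - (Dx R x (u x) (deriv u x) + lam x (u x) (deriv u x) * R x (u x))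
        + (η x (u x) - ξ x (u x) * deriv u x)
          * (deriv (fun t ↦ Lp L t (u t) (deriv u t)) x - Lu L x (u x) (deriv u x))
        - lam x (u x) (deriv u x) * NoetherI L ξ η R x (u x) (deriv u x)) x := by
  have hξ_graph := hasDerivAt_comp_graph hξ hu.hasDerivAt
  have hη_graph := hasDerivAt_comp_graph hη hu.hasDerivAt
  have hR_graph := hasDerivAt_comp_graph hR hu.hasDerivAt
  have hL_jet :=
    hasDerivAt_comp_jet (hL.differentiableAt two_ne_zero) hu.hasDerivAt hu'.hasDerivAt
  have hLp_jet : HasDerivAt (fun t ↦ Lp L t (u t) (deriv u t))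
      (deriv (fun t ↦ Lp L t (u t) (deriv u t)) x) x :=
    (hasDerivAt_comp_jet (differentiableAt_Lp hL) hu.hasDerivAt
      hu'.hasDerivAt).differentiableAt.hasDerivAt
  refine (((hξ_graph.mul (hL_jet.sub (hu'.hasDerivAt.mul hLp_jet))).add
    (hη_graph.mul hLp_jet)).sub hR_graph).congr_deriv ?_
  simp only [lambdaVariation, eta1, NoetherI, Pi.mul_apply, Pi.sub_apply]
  ring

theorem lambda_variational_symmetry_noether_identity_general {lam : ℝ → ℝ → ℝ → ℝ}
    (hL : ContDiffAt ℝ 2 ↿L (x, u x, deriv u x))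
    (hξ : DifferentiableAt ℝ ↿ξ (x, u x)) (hη : DifferentiableAt ℝ ↿η (x, u x))
    (hR : DifferentiableAt ℝ ↿R (x, u x))
    (hsym : lambdaVariation L ξ η lam x (u x) (deriv u x)
      = Dx R x (u x) (deriv u x) + lam x (u x) (deriv u x) * R x (u x))
    (hu : DifferentiableAt ℝ u x) (hu' : DifferentiableAt ℝ (deriv u) x)
    (hEL : deriv (fun t ↦ Lp L t (u t) (deriv u t)) x = Lu L x (u x) (deriv u x)) :
    HasDerivAt (fun t ↦ NoetherI L ξ η R t (u t) (deriv u t))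
      (-(lam x (u x) (deriv u x)) * NoetherI L ξ η R x (u x) (deriv u x)) x := by
  simpa [hsym, hEL] using hasDerivAt_NoetherI_comp_jet lam hL hξ hη hR hu hu'

end Noether

/-- If `X`, the λ-prolongation of `ξ∂_x + η∂_u`, is a divergence λ-variational symmetry of `L`
with divergence term `R`, then along every solution of the Euler–Lagrange equation the function
`φ(x) = I(x,u(x),u'(x))` satisfies `φ' = −λ φ`. -/
theorem lambda_variational_symmetry_noether_identity
    (L lam : ℝ → ℝ → ℝ → ℝ) (ξ η R : ℝ → ℝ → ℝ)
    (hL : ContDiff ℝ (⊤ : ℕ∞) fun z : ℝ × ℝ × ℝ => L z.1 z.2.1 z.2.2)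
    (hξ : ContDiff ℝ (⊤ : ℕ∞) fun z : ℝ × ℝ => ξ z.1 z.2)
    (hη : ContDiff ℝ (⊤ : ℕ∞) fun z : ℝ × ℝ => η z.1 z.2)
    (hR : ContDiff ℝ (⊤ : ℕ∞) fun z : ℝ × ℝ => R z.1 z.2)
    (hlam : ContDiff ℝ (⊤ : ℕ∞) fun z : ℝ × ℝ × ℝ => lam z.1 z.2.1 z.2.2)
    (hsym : ∀ x u p : ℝ,
      ξ x u * Lx L x u p + η x u * Lu L x u p + eta1 ξ η lam x u p * Lp L x u p
        + L x u p * (Dx ξ x u p + lam x u p * ξ x u)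
      = Dx R x u p + lam x u p * R x u)
    (J : Set ℝ) (hJopen : IsOpen J) (hJconn : J.OrdConnected)
    (u : ℝ → ℝ)
    (hu1 : ∀ x ∈ J, DifferentiableAt ℝ u x)
    (hu2 : ∀ x ∈ J, DifferentiableAt ℝ (deriv u) x)
    (hEL : ∀ x ∈ J,
      deriv (fun t => Lp L t (u t) (deriv u t)) x = Lu L x (u x) (deriv u x)) :
    ∀ x ∈ J, HasDerivAt (fun t => NoetherI L ξ η R t (u t) (deriv u t))
      (-(lam x (u x) (deriv u x)) * NoetherI L ξ η R x (u x) (deriv u x)) x := fun x hx ↦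
  lambda_variational_symmetry_noether_identity_general (hL.of_le (by norm_cast)).contDiffAt
    (hξ.differentiable (by simp) _) (hη.differentiable (by simp) _)
    (hR.differentiable (by simp) _) (hsym x _ _) (hu1 x hx) (hu2 x hx) (hEL x hx)
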